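/- arXiv:1811.12285 — 4 statements merged into one kernel-verified Lean document; each statement's English description precedes it below -/
import Mathlib

section
/- In a laxly iterable effect quantale, the while-loop effect simplification identity holds: for all c and e, (c ▷ e ▷ c) ⊔ c ⊔ (c ▷ (e ▷ c)*) = c ▷ (e ▷ c)*. -/
/-- An effect quantale: a join-semilattice-ordered monoid with nilpotent top. -/
structure EffectQuantale (E : Type*) where
  join : E → E → E
  top : E
  seq : E → E → E
  unit : E
  join_comm : ∀ x y, join x y = join y x
  join_assoc : ∀ x y z, join (join x y) z = join x (join y z)
  join_idem : ∀ x, join x x = x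
  join_top : ∀ x, join x top = top
  seq_assoc : ∀ x y z, seq (seq x y) z = seq x (seq y z)
  unit_seq : ∀ x, seq unit x = x
  seq_unit : ∀ x, seq x unit = x
  top_seq : ∀ x, seq top x = top
  seq_top : ∀ x, seq x top = top
  seq_join_left : ∀ a b c, seq a (join b c) = join (seq a b) (seq a c)
  seq_join_right : ∀ a b c, seq (join a b) c = join (seq a c) (seq b c)

/-- The partial order induced by the join: `x ⊑ y` iff `x ⊔ y = y`. -/
def EffectQuantale.le {E : Type*} (Q : EffectQuantale E) (x y : E) : Prop :=
  Q.join x y = y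

/-- A laxly iterable effect quantale: for every `x`, the set of subidempotent
elements above both `x` and the unit has a least element `star x`. -/
structure IterableEffectQuantale (E : Type*) extends EffectQuantale E where
  star : E → E
  star_subidem : ∀ x, toEffectQuantale.le (seq (star x) (star x)) (star x)
  star_extensive : ∀ x, toEffectQuantale.le x (star x)
  star_unit_le : ∀ x, toEffectQuantale.le unit (star x)
  star_least : ∀ x s, toEffectQuantale.le (seq s s) s → toEffectQuantale.le x s →
    toEffectQuantale.le unit s → toEffectQuantale.le (star x) s

/-- While-loop effect simplification: `(c ▷ e ▷ c) ⊔ c ⊔ (c ▷ (e ▷ c)*) = c ▷ (e ▷ c)*`. -/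
theorem IterableEffectQuantale.while_simplification {E : Type*}
    (Q : IterableEffectQuantale E) :
    ∀ c e : E,
      Q.toEffectQuantale.join
        (Q.toEffectQuantale.join
          (Q.toEffectQuantale.seq c (Q.toEffectQuantale.seq e c)) c)
        (Q.toEffectQuantale.seq c (Q.star (Q.toEffectQuantale.seq e c)))
      = Q.toEffectQuantale.seq c (Q.star (Q.toEffectQuantale.seq e c)) := by
  intro c e
  -- Both summands are `c ▷ _` of an element below the star: `e ▷ c` and the unit.
  have hx : Q.join (Q.seq c (Q.seq e c)) (Q.seq c (Q.star (Q.seq e c)))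
      = Q.seq c (Q.star (Q.seq e c)) := by
    rw [← Q.seq_join_left]
    exact congrArg (Q.seq c) (Q.star_extensive (Q.seq e c))
  have hu : Q.join c (Q.seq c (Q.star (Q.seq e c))) = Q.seq c (Q.star (Q.seq e c)) := by
    have h := congrArg (Q.seq c) (Q.star_unit_le (Q.seq e c))
    rwa [Q.seq_join_left, Q.seq_unit] at h
  rw [Q.join_assoc, hu, hx]
end

section
/- Sequencing on the defined fragment of continuation effects is associative and has (∅, I) as a two-sided unit: for all x, y, z in the fragment, (x ▷ y) ▷ z = x ▷ (y ▷ z), x ▷ (∅, I) = x, and (∅, I) ▷ x = x. -/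
/-- Control effects over an effect quantale carrier `E`, prompt tags `L`,
and type labels `T`. -/
inductive ControlEffect (E L T : Type*) where
  | replace : L → E → T → ControlEffect E L T
  | abort : L → E → T → ControlEffect E L T
  | block : ControlEffect E L T → L → ControlEffect E L T

/-- Left accumulation of an underlying effect on a control effect. -/
def ControlEffect.acc {E L T : Type*} (Q : EffectQuantale E) (q : E) :
    ControlEffect E L T → ControlEffect E L T
  | .replace l q' t => .replace l (Q.seq q q') t
  | .abort l q' t => .abort l (Q.seq q q') t
  | .block c l => .block (ControlEffect.acc Q q c) l

/-- The elementwise order on control effects. -/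
inductive ControlEffect.CLe {E L T : Type*} (Q : EffectQuantale E) :
    ControlEffect E L T → ControlEffect E L T → Prop where
  | replace {l : L} {q q' : E} {t : T} : Q.le q q' →
      ControlEffect.CLe Q (.replace l q t) (.replace l q' t)
  | abort {l : L} {q q' : E} {t : T} : Q.le q q' →
      ControlEffect.CLe Q (.abort l q t) (.abort l q' t)
  | block {c c' : ControlEffect E L T} {l : L} : ControlEffect.CLe Q c c' →
      ControlEffect.CLe Q (.block c l) (.block c' l)

/-- The direct order on sets of control effects. -/
def ControlEffect.SLe {E L T : Type*} (Q : EffectQuantale E)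
    (C₁ C₂ : Set (ControlEffect E L T)) : Prop :=
  ∀ c ∈ C₁, ∃ c' ∈ C₂, ControlEffect.CLe Q c c'

/-- Pointwise lifting of left accumulation to sets of control effects. -/
def ControlEffect.accSet {E L T : Type*} (Q : EffectQuantale E) (q : E)
    (C : Set (ControlEffect E L T)) : Set (ControlEffect E L T) :=
  (ControlEffect.acc Q q) '' C

/-- The defined fragment of continuation effects: a set of control effects
paired with a (defined) underlying effect. -/
abbrev CEff (E L T : Type*) := Set (ControlEffect E L T) × E

/-- Sequencing on the defined fragment of continuation effects. -/
def CEff.seq {E L T : Type*} (Q : EffectQuantale E) (x y : CEff E L T) : CEff E L T :=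
  (x.1 ∪ ControlEffect.accSet Q x.2 y.1, Q.seq x.2 y.2)

/-- Join on the defined fragment of continuation effects. -/
def CEff.join {E L T : Type*} (Q : EffectQuantale E) (x y : CEff E L T) : CEff E L T :=
  (x.1 ∪ y.1, Q.join x.2 y.2)

/-- The direct (componentwise) order on the defined fragment. -/
def CEff.le {E L T : Type*} (Q : EffectQuantale E) (x y : CEff E L T) : Prop :=
  ControlEffect.SLe Q x.1 y.1 ∧ Q.le x.2 y.2

theorem ControlEffect.acc_acc {E L T : Type*} (Q : EffectQuantale E) (p q : E)
    (c : ControlEffect E L T) :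
    ControlEffect.acc Q p (ControlEffect.acc Q q c) = ControlEffect.acc Q (Q.seq p q) c := by
  induction c with
  | replace l q' t => simp [ControlEffect.acc, Q.seq_assoc]
  | abort l q' t => simp [ControlEffect.acc, Q.seq_assoc]
  | block c l ih => simp [ControlEffect.acc, ih]

theorem ControlEffect.acc_unit {E L T : Type*} (Q : EffectQuantale E)
    (c : ControlEffect E L T) : ControlEffect.acc Q Q.unit c = c := by
  induction c with
  | replace l q' t => simp [ControlEffect.acc, Q.unit_seq]
  | abort l q' t => simp [ControlEffect.acc, Q.unit_seq]
  | block c l ih => simp [ControlEffect.acc, ih]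

/-- Sequencing on the defined fragment of continuation effects is associative
with `(∅, I)` as a two-sided unit. -/
theorem CEff.seq_monoid {E L T : Type*} (Q : EffectQuantale E) :
    (∀ x y z : CEff E L T, CEff.seq Q (CEff.seq Q x y) z = CEff.seq Q x (CEff.seq Q y z)) ∧
    (∀ x : CEff E L T, CEff.seq Q x ((∅ : Set (ControlEffect E L T)), Q.unit) = x) ∧
    (∀ x : CEff E L T, CEff.seq Q ((∅ : Set (ControlEffect E L T)), Q.unit) x = x) := by
  refine ⟨fun x y z => ?_, fun x => ?_, fun x => ?_⟩
  · simp [CEff.seq, ControlEffect.accSet, Set.image_union, Set.image_image,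
      ControlEffect.acc_acc, Q.seq_assoc, Set.union_assoc]
  · simp [CEff.seq, ControlEffect.accSet, Q.seq_unit]
  · simp [CEff.seq, ControlEffect.accSet, ControlEffect.acc_unit, Q.unit_seq]
end

section
/- Sequencing on the defined fragment of continuation effects sub-distributes over join on the right with respect to the direct order: for all x, y, z in the fragment, (x ▷ z) ⊔ (y ▷ z) ⊑ (x ⊔ y) ▷ z, and the underlying (second) components of the two sides are equal. -/
theorem EffectQuantale.le_refl {E : Type*} (Q : EffectQuantale E) (a : E) : Q.le a a :=
  Q.join_idem a

theorem EffectQuantale.le_join_left {E : Type*} (Q : EffectQuantale E) (a b : E) :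
    Q.le a (Q.join a b) := by
  rw [EffectQuantale.le, ← Q.join_assoc, Q.join_idem]

theorem EffectQuantale.le_join_right {E : Type*} (Q : EffectQuantale E) (a b : E) :
    Q.le b (Q.join a b) := by
  rw [Q.join_comm]
  exact Q.le_join_left b a

theorem EffectQuantale.seq_mono_left {E : Type*} (Q : EffectQuantale E) {a b : E}
    (h : Q.le a b) (c : E) : Q.le (Q.seq a c) (Q.seq b c) := by
  unfold EffectQuantale.le at h ⊢
  rw [← Q.seq_join_right, h]

theorem ControlEffect.CLe.refl {E L T : Type*} (Q : EffectQuantale E)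
    (c : ControlEffect E L T) : ControlEffect.CLe Q c c := by
  induction c with
  | replace l q t => exact .replace (Q.le_refl q)
  | abort l q t => exact .abort (Q.le_refl q)
  | block c l ih => exact .block ih

theorem ControlEffect.acc_mono {E L T : Type*} (Q : EffectQuantale E) {a b : E}
    (h : Q.le a b) (c : ControlEffect E L T) :
    ControlEffect.CLe Q (ControlEffect.acc Q a c) (ControlEffect.acc Q b c) := by
  induction c with
  | replace l q t => exact .replace (Q.seq_mono_left h q)
  | abort l q t => exact .abort (Q.seq_mono_left h q)
  | block c l ih => exact .block ih

/-- Sequencing on the defined fragment sub-distributes over join on the right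
with respect to the direct order, with equal underlying components. -/
theorem CEff.seq_join_right_subdistrib {E L T : Type*} (Q : EffectQuantale E) :
    ∀ x y z : CEff E L T,
      CEff.le Q (CEff.join Q (CEff.seq Q x z) (CEff.seq Q y z))
        (CEff.seq Q (CEff.join Q x y) z) ∧
      (CEff.join Q (CEff.seq Q x z) (CEff.seq Q y z)).2
        = (CEff.seq Q (CEff.join Q x y) z).2 := by
  intro x y z
  have hsnd : (CEff.join Q (CEff.seq Q x z) (CEff.seq Q y z)).2
      = (CEff.seq Q (CEff.join Q x y) z).2 := (Q.seq_join_right x.2 y.2 z.2).symm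
  refine ⟨⟨?_, ?_⟩, hsnd⟩
  · rintro c ((hc | ⟨d, hd, rfl⟩) | (hc | ⟨d, hd, rfl⟩))
    · exact ⟨c, .inl (.inl hc), .refl Q c⟩
    · exact ⟨_, .inr ⟨d, hd, rfl⟩, ControlEffect.acc_mono Q (Q.le_join_left x.2 y.2) d⟩
    · exact ⟨c, .inl (.inr hc), .refl Q c⟩
    · exact ⟨_, .inr ⟨d, hd, rfl⟩, ControlEffect.acc_mono Q (Q.le_join_right x.2 y.2) d⟩
  · rw [hsnd]
    exact Q.le_refl _
end

section
/- (Specialization of the theorem 'Lax Iterability with Continuations' to empty prophecy sets and defined underlying effects.) Let Q be a laxly iterable effect quantale. In the defined fragment of continuation effects over Q, for every pair (C, q) the element (q* ▷ C, q*) is: (i) subidempotent with respect to the direct order, i.e. (q* ▷ C, q*) ▷ (q* ▷ C, q*) ⊑ (q* ▷ C, q*); (ii) above (C, q) ⊔ (∅, I), i.e. (C, q) ⊔ (∅, I) ⊑ (q* ▷ C, q*); and (iii) least such up to the direct order: every pair (C', q') with (C', q') ▷ (C', q') ⊑ (C', q') and (C, q) ⊔ (∅, I) ⊑ (C', q') satisfies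 (q* ▷ C, q*) ⊑ (C', q'). -/
namespace EffectQuantale

variable {E : Type*} (Q : EffectQuantale E)

theorem le_refl_s14 (x : E) : Q.le x x := Q.join_idem x

theorem le_trans {x y z : E} (h₁ : Q.le x y) (h₂ : Q.le y z) : Q.le x z := by
  unfold EffectQuantale.le at *
  rw [← h₂, ← Q.join_assoc, h₁]

theorem le_join_left_s14 (x y : E) : Q.le x (Q.join x y) := by
  unfold EffectQuantale.le
  rw [← Q.join_assoc, Q.join_idem]

theorem le_join_right_s14 (x y : E) : Q.le y (Q.join x y) := by
  rw [Q.join_comm]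
  exact Q.le_join_left_s14 y x

theorem join_le {x y z : E} (h₁ : Q.le x z) (h₂ : Q.le y z) : Q.le (Q.join x y) z := by
  unfold EffectQuantale.le at *
  rw [Q.join_assoc, h₂, h₁]

/-- Distributivity of sequencing over joins makes sequencing monotone in both arguments. -/
theorem seq_mono {a b c d : E} (h₁ : Q.le a b) (h₂ : Q.le c d) :
    Q.le (Q.seq a c) (Q.seq b d) := by
  apply Q.le_trans (y := Q.seq b c)
  · unfold EffectQuantale.le at *
    rw [← Q.seq_join_right, h₁]
  · unfold EffectQuantale.le at *
    rw [← Q.seq_join_left, h₂]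

end EffectQuantale

namespace ControlEffect

variable {E L T : Type*} (Q : EffectQuantale E)

theorem CLe.rfl (c : ControlEffect E L T) : CLe Q c c := by
  induction c with
  | replace l q t => exact .replace (Q.le_refl_s14 q)
  | abort l q t => exact .abort (Q.le_refl_s14 q)
  | block c l ih => exact .block ih

theorem CLe.trans {a b c : ControlEffect E L T} (h₁ : CLe Q a b) (h₂ : CLe Q b c) :
    CLe Q a c := by
  induction h₁ generalizing c with
  | replace h => cases h₂ with | replace h' => exact .replace (Q.le_trans h h')
  | abort h => cases h₂ with | abort h' => exact .abort (Q.le_trans h h')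
  | block _ ih => cases h₂ with | block h' => exact .block (ih h')

theorem acc_unit_s14 (c : ControlEffect E L T) : acc Q Q.unit c = c := by
  induction c with
  | replace l q t => simp [acc, Q.unit_seq]
  | abort l q t => simp [acc, Q.unit_seq]
  | block c l ih => simp [acc, ih]

theorem acc_acc_s14 (p q : E) (c : ControlEffect E L T) :
    acc Q p (acc Q q c) = acc Q (Q.seq p q) c := by
  induction c with
  | replace l r t => simp [acc, Q.seq_assoc]
  | abort l r t => simp [acc, Q.seq_assoc]
  | block c l ih => simp [acc, ih]

theorem acc_mono_s14 {p q : E} (hpq : Q.le p q) {c d : ControlEffect E L T} (hcd : CLe Q c d) :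
    CLe Q (acc Q p c) (acc Q q d) := by
  induction hcd with
  | replace h => exact .replace (Q.seq_mono hpq h)
  | abort h => exact .abort (Q.seq_mono hpq h)
  | block _ ih => exact .block ih

end ControlEffect

/-- Specialization of lax iterability with continuations to empty prophecy sets
and defined underlying effects: `(q* ▷ C, q*)` is the least subidempotent
element of the defined fragment above `(C, q) ⊔ (∅, I)`. -/
theorem CEff.lax_iterability {E L T : Type*} (Q : IterableEffectQuantale E) :
    ∀ (C : Set (ControlEffect E L T)) (q : E),
      CEff.le Q.toEffectQuantale
        (CEff.seq Q.toEffectQuantale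
          (ControlEffect.accSet Q.toEffectQuantale (Q.star q) C, Q.star q)
          (ControlEffect.accSet Q.toEffectQuantale (Q.star q) C, Q.star q))
        (ControlEffect.accSet Q.toEffectQuantale (Q.star q) C, Q.star q) ∧
      CEff.le Q.toEffectQuantale
        (CEff.join Q.toEffectQuantale (C, q)
          ((∅ : Set (ControlEffect E L T)), Q.toEffectQuantale.unit))
        (ControlEffect.accSet Q.toEffectQuantale (Q.star q) C, Q.star q) ∧
      ∀ (C' : Set (ControlEffect E L T)) (q' : E),
        CEff.le Q.toEffectQuantale
          (CEff.seq Q.toEffectQuantale (C', q') (C', q')) (C', q') →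
        CEff.le Q.toEffectQuantale
          (CEff.join Q.toEffectQuantale (C, q)
            ((∅ : Set (ControlEffect E L T)), Q.toEffectQuantale.unit))
          (C', q') →
        CEff.le Q.toEffectQuantale
          (ControlEffect.accSet Q.toEffectQuantale (Q.star q) C, Q.star q)
          (C', q') := by
  intro C q
  refine ⟨⟨?_, Q.star_subidem q⟩, ⟨?_, Q.join_le (Q.star_extensive q) (Q.star_unit_le q)⟩, ?_⟩
  · rintro c (hc | ⟨_, ⟨d, hd, rfl⟩, rfl⟩)
    · exact ⟨c, hc, .rfl _ c⟩
    · refine ⟨_, ⟨d, hd, rfl⟩, ?_⟩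
      dsimp only
      rw [ControlEffect.acc_acc_s14]
      exact ControlEffect.acc_mono_s14 _ (Q.star_subidem q) (.rfl _ d)
  · rintro c (hc | hc)
    · refine ⟨_, ⟨c, hc, rfl⟩, ?_⟩
      have h := ControlEffect.acc_mono_s14 _ (Q.star_unit_le q) (.rfl _ c)
      rwa [ControlEffect.acc_unit_s14] at h
    · exact hc.elim
  · rintro C' q' ⟨hseqC, hseq⟩ ⟨hleC, hle⟩
    have hstar : Q.le (Q.star q) q' :=
      Q.star_least q q' hseq (Q.le_trans (Q.le_join_left_s14 _ _) hle)
        (Q.le_trans (Q.le_join_right_s14 _ _) hle)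
    refine ⟨?_, hstar⟩
    rintro _ ⟨c, hc, rfl⟩
    obtain ⟨c', hc', hcc'⟩ := hleC c (Or.inl hc)
    obtain ⟨d, hd, hcd⟩ := hseqC _ (Or.inr ⟨c', hc', rfl⟩)
    exact ⟨d, hd, (ControlEffect.acc_mono_s14 _ hstar hcc').trans _ hcd⟩
end
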